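/- (Vector Elimination) Consider L(b;x₁,y₁;x₂,y₂) and suppose either (i) there is an odd positive integer k with x₂ = k·x₁ and y₂ ≡ k·y₁ (mod 2b), or (ii) there is an even positive integer k with x₂ = k·x₁ and y₂ ≡ k·y₁ + b (mod 2b). Then L(b;x₁,y₁;x₂,y₂) has the same Sprague–Grundy values as the two-move game L(b;x₁,y₁): for all (x,y) ∈ ℕ×ℕ, SG_{L(b;x₁,y₁;x₂,y₂)}(x,y) = SG_{L(b;x₁,y₁)}(x,y). In particular its SG-values are all 0 or 1 (no 2s or 3s). -/

import Mathlib

/-- The minimum excludant of a set of naturals: the least natural number not in the set. -/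
noncomputable def mex (S : Set ℕ) : ℕ := sInf {n : ℕ | n ∉ S}

/-- `SG` is the Sprague–Grundy function of the Lengyel transfer game `L(b; x₁,y₁; x₂,y₂)`:
from `(x,y)` one may move to `(x, y−b)` (when `y ≥ b`), to `(x−x₁, y+y₁)` (when `x ≥ x₁`),
or to `(x−x₂, y+y₂)` (when `x ≥ x₂`), and `SG` satisfies the mex recurrence. -/
def IsLengyelSG (b x1 y1 x2 y2 : ℕ) (SG : ℕ → ℕ → ℕ) : Prop :=
  ∀ x y : ℕ, SG x y = mex
    ((if b ≤ y then ({SG x (y - b)} : Set ℕ) else ∅) ∪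
     (if x1 ≤ x then ({SG (x - x1) (y + y1)} : Set ℕ) else ∅) ∪
     (if x2 ≤ x then ({SG (x - x2) (y + y2)} : Set ℕ) else ∅))
/-- `SG` is the Sprague–Grundy function of the two-move game `L(b; x₁,y₁)`:
from `(x,y)` one may move to `(x, y−b)` (when `y ≥ b`) or to `(x−x₁, y+y₁)` (when `x ≥ x₁`). -/
def IsLengyel2SG (b x1 y1 : ℕ) (SG : ℕ → ℕ → ℕ) : Prop :=
  ∀ x y : ℕ, SG x y = mex
    ((if b ≤ y then ({SG x (y - b)} : Set ℕ) else ∅) ∪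
     (if x1 ≤ x then ({SG (x - x1) (y + y1)} : Set ℕ) else ∅))

/-!
Every position carries a parity: transfer as often as possible by `(x₁, y₁)`, then remove `b` as
often as possible, and count these moves modulo 2. Each legal move switches this parity, including
the move by an eliminable `(x₂, y₂)`, and every terminal position has parity 0. In a game with such
a two-colouring every mex is taken over a subset of `{0}` or `{1}`, so the Sprague–Grundy function
is the colouring itself, whether or not the extra move is available.
-/

theorem mex_eq_of_notMem_of_forall_lt_mem {S : Set ℕ} {n : ℕ} (hn : n ∉ S)
    (hlt : ∀ m < n, m ∈ S) : mex S = n :=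
  IsLeast.csInf_eq ⟨hn, fun _ hm => not_lt.1 fun h => hm (hlt _ h)⟩

section SpragueGrundy

variable {α : Type*} {Move : α → α → Prop} {g c : α → ℕ}

/-- `g` is a Sprague–Grundy function of the impartial game on `α` in which `Move p q` says that
`q` is an option of `p`. -/
def IsSpragueGrundy (Move : α → α → Prop) (g : α → ℕ) : Prop :=
  ∀ p, g p = mex (g '' {q | Move p q})

theorem IsSpragueGrundy.eq_of_alternating (hg : IsSpragueGrundy Move g)
    (wf : WellFounded (flip Move)) (alternating : ∀ p q, Move p q → c p + c q = 1)
    (terminal : ∀ p, (∀ q, ¬ Move p q) → c p = 0) : g = c := by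
  funext p
  induction p using wf.induction with
  | _ p ih =>
    have image_eq : g '' {q | Move p q} = c '' {q | Move p q} := Set.image_congr ih
    rw [hg p, image_eq]
    apply mex_eq_of_notMem_of_forall_lt_mem
    · rintro ⟨q, hq, hcq⟩
      have := alternating p q hq
      omega
    · intro m hm
      obtain ⟨q, hq⟩ : ∃ q, Move p q := by
        by_contra! h
        have := terminal p h
        omega
      have := alternating p q hq
      exact ⟨q, hq, by omega⟩

end SpragueGrundy

/-- The moves of the transfer game with removal `b` and an arbitrary set `V` of transfer vectors.
Both kinds of moves are written additively, so that no truncated subtraction occurs. -/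
inductive TransferMove (b : ℕ) (V : Set (ℕ × ℕ)) : ℕ × ℕ → ℕ × ℕ → Prop
  | remove (x y : ℕ) : TransferMove b V (x, y + b) (x, y)
  | transfer (x y : ℕ) {v : ℕ × ℕ} (hv : v ∈ V) : TransferMove b V (x + v.1, y) (x, y + v.2)

/-- The number, modulo 2, of moves made from `p` when one first transfers by `u` and then removes
`b`, each as often as possible. -/
def transferParity (b : ℕ) (u p : ℕ × ℕ) : ℕ :=
  (p.1 / u.1 + (p.2 + p.1 / u.1 * u.2) / b) % 2

/-- The vectors `v` whose transfer the Vector Elimination theorem discards in the presence of `u`.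
The term `(k + 1) * b` merges the two cases of that theorem: modulo `2 * b` it is `0` for odd `k`
and `b` for even `k`. -/
def IsEliminable (b : ℕ) (u v : ℕ × ℕ) : Prop :=
  ∃ k, v.1 = k * u.1 ∧ v.2 ≡ k * u.2 + (k + 1) * b [MOD 2 * b]

section TransferGame

variable {b : ℕ} {u v : ℕ × ℕ} {V : Set (ℕ × ℕ)}

theorem IsEliminable.of_odd {k : ℕ} (hk : Odd k) (h₁ : v.1 = k * u.1)
    (h₂ : v.2 ≡ k * u.2 [MOD 2 * b]) : IsEliminable b u v := by
  obtain ⟨j, rfl⟩ := hk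
  refine ⟨_, h₁, h₂.trans ?_⟩
  rw [show (2 * j + 1 + 1) * b = 2 * b * (j + 1) by ring]
  exact (Nat.add_modulus_mul_modEq_iff.2 rfl).symm

theorem IsEliminable.of_even {k : ℕ} (hk : Even k) (h₁ : v.1 = k * u.1)
    (h₂ : v.2 ≡ k * u.2 + b [MOD 2 * b]) : IsEliminable b u v := by
  obtain ⟨j, rfl⟩ := hk
  refine ⟨_, h₁, h₂.trans ?_⟩
  rw [show (j + j + 1) * b = b + 2 * b * j by ring, ← add_assoc]
  exact (Nat.add_modulus_mul_modEq_iff.2 rfl).symm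

theorem IsEliminable.refl (b : ℕ) (u : ℕ × ℕ) : IsEliminable b u u :=
  .of_odd odd_one (one_mul _).symm (by rw [one_mul])

theorem div_modEq_div_of_modEq_mul {a c m n : ℕ} (h : a ≡ c [MOD m * n]) :
    a / n ≡ c / n [MOD m] := by
  rw [Nat.ModEq, ← Nat.mod_mul_right_div_self, ← Nat.mod_mul_right_div_self, mul_comm n, h]

theorem transferParity_remove (hb : 0 < b) (x y : ℕ) :
    transferParity b u (x, y + b) + transferParity b u (x, y) = 1 := by
  simp only [transferParity, Nat.add_right_comm y b, Nat.add_div_right _ hb]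
  omega

theorem transferParity_transfer (hb : 0 < b) (hu : 0 < u.1) (h : IsEliminable b u v) (x y : ℕ) :
    transferParity b u (x + v.1, y) + transferParity b u (x, y + v.2) = 1 := by
  obtain ⟨k, hv₁, hv₂⟩ := h
  have div_eq : (x + v.1) / u.1 = x / u.1 + k := by rw [hv₁, Nat.add_mul_div_right _ _ hu]
  simp only [transferParity, div_eq]
  generalize x / u.1 = m
  have removals_modEq :=
    calc (y + v.2 + m * u.2) / b
      _ ≡ (y + (k * u.2 + (k + 1) * b) + m * u.2) / b [MOD 2] :=
        div_modEq_div_of_modEq_mul ((hv₂.add_left y).add_right (m * u.2))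
      _ = (y + (m + k) * u.2 + (k + 1) * b) / b := by ring_nf
      _ = (y + (m + k) * u.2) / b + (k + 1) := Nat.add_mul_div_right _ _ hb
  rw [Nat.ModEq] at removals_modEq
  omega

theorem transferParity_eq_zero {p : ℕ × ℕ} (h₁ : p.1 < u.1) (h₂ : p.2 < b) :
    transferParity b u p = 0 := by
  simp [transferParity, Nat.div_eq_of_lt h₁, Nat.div_eq_of_lt h₂]

theorem TransferMove.wellFounded_flip (hb : 0 < b) (hV : ∀ v ∈ V, 0 < v.1) :
    WellFounded (flip (TransferMove b V)) := by
  refine Subrelation.wf ?_ (wellFounded_lt.prod_lex wellFounded_lt)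
  rintro _ _ (⟨x, y⟩ | ⟨x, y, hv⟩)
  · exact .right _ (Nat.lt_add_of_pos_right hb)
  · exact .left _ _ (Nat.lt_add_of_pos_right (hV _ hv))

theorem IsSpragueGrundy.eq_transferParity {g : ℕ × ℕ → ℕ}
    (hg : IsSpragueGrundy (TransferMove b V) g) (hb : 0 < b) (hV : ∀ v ∈ V, 0 < v.1)
    (hu : u ∈ V) (helim : ∀ v ∈ V, IsEliminable b u v) : g = transferParity b u := by
  refine hg.eq_of_alternating (TransferMove.wellFounded_flip hb hV) ?_ ?_
  · rintro _ _ (⟨x, y⟩ | ⟨x, y, hv⟩)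
    · exact transferParity_remove hb x y
    · exact transferParity_transfer hb (hV u hu) (helim _ hv) x y
  · rintro ⟨x, y⟩ terminal
    apply transferParity_eq_zero <;> by_contra! hle <;>
      obtain ⟨z, rfl⟩ := Nat.exists_eq_add_of_le' hle
    · exact terminal _ (.transfer z y hu)
    · exact terminal _ (.remove x z)

theorem image_transferMove (g : ℕ × ℕ → ℕ) (x y : ℕ) :
    g '' {q | TransferMove b V (x, y) q} =
      (if b ≤ y then {g (x, y - b)} else ∅) ∪
        ⋃ v ∈ V, if v.1 ≤ x then {g (x - v.1, y + v.2)} else ∅ := by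
  ext n
  simp only [Set.mem_union, Set.mem_iUnion, Set.mem_ite_empty_right, Set.mem_singleton_iff]
  constructor
  · rintro ⟨_, ⟨_, y⟩ | ⟨x, _, hv⟩, rfl⟩
    · exact .inl ⟨Nat.le_add_left b y, by rw [Nat.add_sub_cancel]⟩
    · exact .inr ⟨_, hv, Nat.le_add_left _ x, by rw [Nat.add_sub_cancel]⟩
  · rintro (⟨hle, rfl⟩ | ⟨v, hv, hle, rfl⟩) <;> obtain ⟨z, rfl⟩ := Nat.exists_eq_add_of_le' hle
    · exact ⟨_, .remove x z, by rw [Nat.add_sub_cancel]⟩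
    · exact ⟨_, .transfer z y hv, by rw [Nat.add_sub_cancel]⟩

theorem isLengyelSG_iff_isSpragueGrundy {x1 y1 x2 y2 : ℕ} {SG : ℕ → ℕ → ℕ} :
    IsLengyelSG b x1 y1 x2 y2 SG ↔
      IsSpragueGrundy (TransferMove b {(x1, y1), (x2, y2)}) (Function.uncurry SG) := by
  simp only [IsLengyelSG, IsSpragueGrundy, Prod.forall, image_transferMove, Set.biUnion_insert,
    Set.biUnion_singleton, Function.uncurry_apply_pair, Set.union_assoc]

theorem isLengyel2SG_iff_isSpragueGrundy {x1 y1 : ℕ} {SG : ℕ → ℕ → ℕ} :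
    IsLengyel2SG b x1 y1 SG ↔
      IsSpragueGrundy (TransferMove b {(x1, y1)}) (Function.uncurry SG) := by
  simp only [IsLengyel2SG, IsSpragueGrundy, Prod.forall, image_transferMove,
    Set.biUnion_singleton, Function.uncurry_apply_pair]

end TransferGame

/-- Vector Elimination: if there is an odd positive `k` with `x₂ = k·x₁` and
`y₂ ≡ k·y₁ (mod 2b)`, or an even positive `k` with `x₂ = k·x₁` and
`y₂ ≡ k·y₁ + b (mod 2b)`, then `L(b;x₁,y₁;x₂,y₂)` has the same SG-values as the
two-move game `L(b;x₁,y₁)`; in particular all its values are `0` or `1`. -/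
theorem vector_elimination (b x1 x2 y1 y2 : ℕ) (hb : 0 < b) (hx1 : 0 < x1) (hx2 : 0 < x2)
    (hk : (∃ k : ℕ, Odd k ∧ 0 < k ∧ x2 = k * x1 ∧ y2 ≡ k * y1 [MOD 2 * b]) ∨
          (∃ k : ℕ, Even k ∧ 0 < k ∧ x2 = k * x1 ∧ y2 ≡ k * y1 + b [MOD 2 * b]))
    (SG SG2 : ℕ → ℕ → ℕ)
    (hSG : IsLengyelSG b x1 y1 x2 y2 SG) (hSG2 : IsLengyel2SG b x1 y1 SG2) :
    (∀ x y : ℕ, SG x y = SG2 x y) ∧ (∀ x y : ℕ, SG x y = 0 ∨ SG x y = 1) := by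
  have eliminable : IsEliminable b (x1, y1) (x2, y2) := by
    rcases hk with ⟨k, hodd, -, hx, hy⟩ | ⟨k, heven, -, hx, hy⟩
    · exact .of_odd hodd hx hy
    · exact .of_even heven hx hy
  have SG_eq : Function.uncurry SG = transferParity b (x1, y1) :=
    (isLengyelSG_iff_isSpragueGrundy.1 hSG).eq_transferParity hb (by simp [hx1, hx2]) (by simp)
      (by simp [IsEliminable.refl, eliminable])
  have SG2_eq : Function.uncurry SG2 = transferParity b (x1, y1) :=
    (isLengyel2SG_iff_isSpragueGrundy.1 hSG2).eq_transferParity hb (by simp [hx1]) (by simp)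
      (by simp [IsEliminable.refl])
  refine ⟨fun x y => congrFun (SG_eq.trans SG2_eq.symm) (x, y), fun x y => ?_⟩
  have SG_apply : SG x y = transferParity b (x1, y1) (x, y) := congrFun SG_eq (x, y)
  rw [SG_apply]
  exact Nat.mod_two_eq_zero_or_one _
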